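/- On any almost quaternion-Hermitian manifold, for any local adapted basis I,J,K the exterior derivatives of the local Kähler forms satisfy the contraction identity IΛ_K dω_J + IΛ_J dω_K = −Λ_J dω_J + Λ_K dω_K, together with the identities obtained by cyclic permutation of (I,J,K). -/

import Mathlib

/-!  Synthetic (Koszul-style) model of an almost quaternion-Hermitian `4n`-manifold.

`C` plays the role of the commutative ℝ-algebra of smooth functions and `V` that of
the `C`-module of vector fields, equipped with a directional derivative `D`, a Lie
bracket, a Riemannian metric `g` together with its Levi-Civita connection `nab`
(characterised by being torsion-free and metric), a local adapted basis `I, J, K`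
of anticommuting almost complex structures with `K = I J`, each compatible with the
metric, and a (local) orthonormal frame.  -/

noncomputable section

open scoped BigOperators

structure AQH (n : ℕ) (C : Type*) (V : Type*) [CommRing C] [Algebra ℝ C]
    [AddCommGroup V] [Module C V] where
  /-- derivative of a function along a vector field -/
  D : V → C → C
  D_add : ∀ X f g, D X (f + g) = D X f + D X g
  D_mul : ∀ X f g, D X (f * g) = f * D X g + g * D X f
  D_const : ∀ X (r : ℝ), D X (algebraMap ℝ C r) = 0
  D_addX : ∀ X Y f, D (X + Y) f = D X f + D Y f
  D_smulX : ∀ (f : C) (X : V) (h : C), D (f • X) h = f * D X h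
  /-- the Lie bracket of vector fields -/
  bracket : V → V → V
  bracket_skew : ∀ X Y, bracket X Y = -bracket Y X
  bracket_add : ∀ X Y Z, bracket X (Y + Z) = bracket X Y + bracket X Z
  bracket_smul : ∀ X (f : C) Y, bracket X (f • Y) = f • bracket X Y + (D X f) • Y
  bracket_jacobi : ∀ X Y Z,
    bracket X (bracket Y Z) + bracket Y (bracket Z X) + bracket Z (bracket X Y) = 0
  D_bracket : ∀ X Y f, D (bracket X Y) f = D X (D Y f) - D Y (D X f)
  /-- the Riemannian metric -/
  g : V → V → C
  g_symm : ∀ X Y, g X Y = g Y X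
  g_add : ∀ X Y Z, g (X + Y) Z = g X Z + g Y Z
  g_smul : ∀ (f : C) X Y, g (f • X) Y = f * g X Y
  /-- the Levi-Civita connection -/
  nab : V → V → V
  nab_addX : ∀ X Y Z, nab (X + Y) Z = nab X Z + nab Y Z
  nab_smulX : ∀ (f : C) X Y, nab (f • X) Y = f • nab X Y
  nab_add : ∀ X Y Z, nab X (Y + Z) = nab X Y + nab X Z
  nab_leibniz : ∀ X (f : C) Y, nab X (f • Y) = f • nab X Y + (D X f) • Y
  torsion_free : ∀ X Y, nab X Y - nab Y X = bracket X Y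
  nab_metric : ∀ X Y Z, D X (g Y Z) = g (nab X Y) Z + g Y (nab X Z)
  /-- the (local) adapted basis of almost complex structures -/
  I : V → V
  J : V → V
  K : V → V
  I_lin : ∀ (f : C) X Y, I (f • X + Y) = f • I X + I Y
  J_lin : ∀ (f : C) X Y, J (f • X + Y) = f • J X + J Y
  K_lin : ∀ (f : C) X Y, K (f • X + Y) = f • K X + K Y
  I_sq : ∀ X, I (I X) = -X
  J_sq : ∀ X, J (J X) = -X
  K_def : ∀ X, K X = I (J X)
  anticomm : ∀ X, I (J X) = -J (I X)
  I_metric : ∀ X Y, g (I X) (I Y) = g X Y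
  J_metric : ∀ X Y, g (J X) (J Y) = g X Y
  /-- a (local) orthonormal frame -/
  frame : Fin (4 * n) → V
  frame_orthonormal : ∀ i j, g (frame i) (frame j) = if i = j then 1 else 0
  frame_span : ∀ X, X = ∑ i, g X (frame i) • frame i

namespace AQH

section ops

variable {C V : Type*} [CommRing C]

/-- the operator `A_(1)` on covariant 3-tensors -/
def op1 (A : V → V) (ψ : V → V → V → C) : V → V → V → C := fun X Y Z => -ψ (A X) Y Z

/-- the operator `A_(2)` on covariant 3-tensors -/
def op2 (A : V → V) (ψ : V → V → V → C) : V → V → V → C := fun X Y Z => -ψ X (A Y) Z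

/-- the operator `A_(3)` on covariant 3-tensors -/
def op3 (A : V → V) (ψ : V → V → V → C) : V → V → V → C := fun X Y Z => -ψ X Y (A Z)

/-- the operator `A_(12) = A_(1) A_(2)` on covariant 3-tensors -/
def op12 (A : V → V) (ψ : V → V → V → C) : V → V → V → C := fun X Y Z => ψ (A X) (A Y) Z

/-- the operator `A_(13) = A_(1) A_(3)` on covariant 3-tensors -/
def op13 (A : V → V) (ψ : V → V → V → C) : V → V → V → C := fun X Y Z => ψ (A X) Y (A Z)

/-- the operator `A_(23) = A_(2) A_(3)` on covariant 3-tensors -/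
def op23 (A : V → V) (ψ : V → V → V → C) : V → V → V → C := fun X Y Z => ψ X (A Y) (A Z)

/-- the operator `𝓛_A = A_(12) + A_(13) + A_(23)` on three-forms -/
def calL (A : V → V) (ψ : V → V → V → C) : V → V → V → C :=
  fun X Y Z => op12 A ψ X Y Z + op13 A ψ X Y Z + op23 A ψ X Y Z

/-- the action `(A ν)(X) = -ν (A X)` of `A` on a one-form -/
def act1 (A : V → V) (ν : V → C) : V → C := fun X => -ν (A X)

/-- the action `(A ψ)(X,Y,Z) = -ψ(AX,AY,AZ)` of `A` on a three-form -/
def act3 (A : V → V) (ψ : V → V → V → C) : V → V → V → C :=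
  fun X Y Z => -ψ (A X) (A Y) (A Z)

/-- wedge product of two one-forms -/
def wedge11 (α β : V → C) : V → V → C := fun X Y => α X * β Y - α Y * β X

/-- wedge product of a one-form and a two-form -/
def wedge12 (ν : V → C) (ω : V → V → C) : V → V → V → C :=
  fun X Y Z => ν X * ω Y Z - ν Y * ω X Z + ν Z * ω X Y

/-- wedge product of two two-forms -/
def wedge22 (α β : V → V → C) : V → V → V → V → C := fun X Y Z W =>
  α X Y * β Z W - α X Z * β Y W + α X W * β Y Z
    + α Z W * β X Y - α Y W * β X Z + α Y Z * β X W

/-- a (0,3)-tensor is an alternating three-form -/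
def IsAlt3 (T : V → V → V → C) : Prop :=
  (∀ X Y Z, T Y X Z = -T X Y Z) ∧ (∀ X Y Z, T X Z Y = -T X Y Z)

variable [AddCommGroup V] [Module C V]

/-- `C`-linearity (tensoriality) of a three-form in its first argument -/
def Lin3 (T : V → V → V → C) : Prop :=
  ∀ (f : C) X X' Y Z, T (f • X + X') Y Z = f * T X Y Z + T X' Y Z

/-- `C`-linearity (tensoriality) of a one-form -/
def Lin1 (ν : V → C) : Prop := ∀ (f : C) X X', ν (f • X + X') = f * ν X + ν X'

end ops

section derived

variable {n : ℕ} {C V : Type*} [CommRing C] [Algebra ℝ C] [AddCommGroup V] [Module C V]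
  [Module ℝ V] [IsScalarTower ℝ C V]

variable (M : AQH n C V)

/-- the Kähler form `ω_A(X,Y) = g(X, A Y)` -/
def omega (A : V → V) : V → V → C := fun X Y => M.g X (A Y)

/-- `(∇_X A) Y` -/
def nabA (A : V → V) : V → V → V := fun X Y => M.nab X (A Y) - A (M.nab X Y)

/-- covariant derivative of a 2-form: `(∇_X ψ)(Y,Z)` -/
def nab2 (ψ : V → V → C) : V → V → V → C :=
  fun X Y Z => M.D X (ψ Y Z) - ψ (M.nab X Y) Z - ψ Y (M.nab X Z)

/-- covariant derivative of a 4-form -/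
def nab4 (ψ : V → V → V → V → C) : V → V → V → V → V → C :=
  fun X Y Z W U => M.D X (ψ Y Z W U) - ψ (M.nab X Y) Z W U - ψ Y (M.nab X Z) W U
    - ψ Y Z (M.nab X W) U - ψ Y Z W (M.nab X U)

/-- exterior derivative of a one-form -/
def d1 (ν : V → C) : V → V → C :=
  fun X Y => M.D X (ν Y) - M.D Y (ν X) - ν (M.bracket X Y)

/-- exterior derivative of a two-form -/
def d2 (ψ : V → V → C) : V → V → V → C :=
  fun X Y Z => M.D X (ψ Y Z) - M.D Y (ψ X Z) + M.D Z (ψ X Y)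
    - ψ (M.bracket X Y) Z + ψ (M.bracket X Z) Y - ψ (M.bracket Y Z) X

/-- exterior derivative of a four-form -/
def d4 (ψ : V → V → V → V → C) : V → V → V → V → V → C := fun X Y Z W U =>
  M.D X (ψ Y Z W U) - M.D Y (ψ X Z W U) + M.D Z (ψ X Y W U) - M.D W (ψ X Y Z U)
      + M.D U (ψ X Y Z W)
    - ψ (M.bracket X Y) Z W U + ψ (M.bracket X Z) Y W U - ψ (M.bracket X W) Y Z U
      + ψ (M.bracket X U) Y Z W
    - ψ (M.bracket Y Z) X W U + ψ (M.bracket Y W) X Z U - ψ (M.bracket Y U) X Z W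
    - ψ (M.bracket Z W) X Y U + ψ (M.bracket Z U) X Y W
    - ψ (M.bracket W U) X Y Z

/-- the Nijenhuis tensor `N_A(X,Y)` -/
def nijV (A : V → V) : V → V → V := fun X Y =>
  M.bracket X Y + A (M.bracket (A X) Y) + A (M.bracket X (A Y)) - M.bracket (A X) (A Y)

/-- the Nijenhuis `(0,3)`-tensor `N_A(X,Y,Z) = g(X, N_A(Y,Z))` -/
def nij3 (A : V → V) : V → V → V → C := fun X Y Z => M.g X (M.nijV A Y Z)

/-- the induced inner product of two 2-forms,
`⟨ψ,φ⟩ = (1/2!) ψ(e_i,e_j) φ(e_i,e_j)` -/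
def inner2 (ψ φ : V → V → C) : C :=
  (1/2 : ℝ) • ∑ i, ∑ j, ψ (M.frame i) (M.frame j) * φ (M.frame i) (M.frame j)

/-- the contraction `(Λ_A β)(X) = ⟨X ⌟ β, ω_A⟩` of a three-form -/
def Lam (A : V → V) (β : V → V → V → C) : V → C :=
  fun X => (1/2 : ℝ) •
    ∑ i, ∑ j, β X (M.frame i) (M.frame j) * M.omega A (M.frame i) (M.frame j)

/-- `λ_I(X) = (1/2n) ⟨∇_X ω_J, ω_K⟩` -/
def lambdaI : V → C := fun X =>
  (1/(2*(n:ℝ))) • M.inner2 (fun Y Z => M.nab2 (M.omega M.J) X Y Z) (M.omega M.K)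

/-- `λ_J(X) = (1/2n) ⟨∇_X ω_K, ω_I⟩` -/
def lambdaJ : V → C := fun X =>
  (1/(2*(n:ℝ))) • M.inner2 (fun Y Z => M.nab2 (M.omega M.K) X Y Z) (M.omega M.I)

/-- `λ_K(X) = (1/2n) ⟨∇_X ω_I, ω_J⟩` -/
def lambdaK : V → C := fun X =>
  (1/(2*(n:ℝ))) • M.inner2 (fun Y Z => M.nab2 (M.omega M.I) X Y Z) (M.omega M.J)

/-- codifferential of a two-form -/
def codiff2 (ψ : V → V → C) : V → C := fun Z => -∑ i, M.nab2 ψ (M.frame i) (M.frame i) Z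

/-- codifferential of a four-form -/
def codiff4 (ψ : V → V → V → V → C) : V → V → V → C :=
  fun X Y Z => -∑ i, M.nab4 ψ (M.frame i) (M.frame i) X Y Z

/-- `β_I = J dω_J + K dω_K` -/
def betaI : V → V → V → C := fun X Y Z =>
  act3 M.J (M.d2 (M.omega M.J)) X Y Z + act3 M.K (M.d2 (M.omega M.K)) X Y Z

/-- `β_J = K dω_K + I dω_I` -/
def betaJ : V → V → V → C := fun X Y Z =>
  act3 M.K (M.d2 (M.omega M.K)) X Y Z + act3 M.I (M.d2 (M.omega M.I)) X Y Z

/-- `β_K = I dω_I + J dω_J` -/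
def betaK : V → V → V → C := fun X Y Z =>
  act3 M.I (M.d2 (M.omega M.I)) X Y Z + act3 M.J (M.d2 (M.omega M.J)) X Y Z

/-- the intrinsic torsion
`ξ_X Y = -(1/4) Σ_A A (∇_X A) Y + (1/2) Σ_A λ_A(X) A Y` -/
def xi : V → V → V := fun X Y =>
  (-(1/4 : ℝ)) • (M.I (M.nabA M.I X Y) + M.J (M.nabA M.J X Y) + M.K (M.nabA M.K X Y))
    + (1/2 : ℝ) • (M.lambdaI X • M.I Y + M.lambdaJ X • M.J Y + M.lambdaK X • M.K Y)

/-- the one-form `ν^I_4 = I Λ_I β_I` -/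
def nu4I : V → C := act1 M.I (M.Lam M.I M.betaI)

/-- the one-form `ν^J_4 = J Λ_J β_J` -/
def nu4J : V → C := act1 M.J (M.Lam M.J M.betaJ)

/-- the one-form `ν^K_4 = K Λ_K β_K` -/
def nu4K : V → C := act1 M.K (M.Lam M.K M.betaK)

/-- `ν^I_3`, determined by `J Λ_J β_I = (1/(2n-1)) (ν^I_4 + (2n+1)(n-1) ν^I_3)` -/
def nu3I : V → C := fun X =>
  (1/((2*(n:ℝ)+1) * ((n:ℝ)-1))) •
    ((2*(n:ℝ)-1) • act1 M.J (M.Lam M.J M.betaI) X - M.nu4I X)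

/-- `ν^J_3`, determined by `K Λ_K β_J = (1/(2n-1)) (ν^J_4 + (2n+1)(n-1) ν^J_3)` -/
def nu3J : V → C := fun X =>
  (1/((2*(n:ℝ)+1) * ((n:ℝ)-1))) •
    ((2*(n:ℝ)-1) • act1 M.K (M.Lam M.K M.betaJ) X - M.nu4J X)

/-- `ν^K_3`, determined by `I Λ_I β_K = (1/(2n-1)) (ν^K_4 + (2n+1)(n-1) ν^K_3)` -/
def nu3K : V → C := fun X =>
  (1/((2*(n:ℝ)+1) * ((n:ℝ)-1))) •
    ((2*(n:ℝ)-1) • act1 M.I (M.Lam M.I M.betaK) X - M.nu4K X)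

/-- `β^{(E)}_{3I} = -(1/2) Jν^I_3 ∧ ω_J - (1/2) Kν^I_3 ∧ ω_K + (1/(2n-1)) Iν^I_3 ∧ ω_I` -/
def betaE3I : V → V → V → C := fun X Y Z =>
  (-(1/2:ℝ)) • wedge12 (act1 M.J M.nu3I) (M.omega M.J) X Y Z
    + (-(1/2:ℝ)) • wedge12 (act1 M.K M.nu3I) (M.omega M.K) X Y Z
    + (1/(2*(n:ℝ)-1)) • wedge12 (act1 M.I M.nu3I) (M.omega M.I) X Y Z

def betaE3J : V → V → V → C := fun X Y Z =>
  (-(1/2:ℝ)) • wedge12 (act1 M.K M.nu3J) (M.omega M.K) X Y Z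
    + (-(1/2:ℝ)) • wedge12 (act1 M.I M.nu3J) (M.omega M.I) X Y Z
    + (1/(2*(n:ℝ)-1)) • wedge12 (act1 M.J M.nu3J) (M.omega M.J) X Y Z

def betaE3K : V → V → V → C := fun X Y Z =>
  (-(1/2:ℝ)) • wedge12 (act1 M.I M.nu3K) (M.omega M.I) X Y Z
    + (-(1/2:ℝ)) • wedge12 (act1 M.J M.nu3K) (M.omega M.J) X Y Z
    + (1/(2*(n:ℝ)-1)) • wedge12 (act1 M.K M.nu3K) (M.omega M.K) X Y Z

/-- `β_{4I} = -(1/(2n-1)) Iν^I_4 ∧ ω_I` -/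
def beta4I : V → V → V → C := fun X Y Z =>
  (-(1/(2*(n:ℝ)-1))) • wedge12 (act1 M.I M.nu4I) (M.omega M.I) X Y Z

def beta4J : V → V → V → C := fun X Y Z =>
  (-(1/(2*(n:ℝ)-1))) • wedge12 (act1 M.J M.nu4J) (M.omega M.J) X Y Z

def beta4K : V → V → V → C := fun X Y Z =>
  (-(1/(2*(n:ℝ)-1))) • wedge12 (act1 M.K M.nu4K) (M.omega M.K) X Y Z

/-- `β_I^{(3+K)} = β_I - β^{(E)}_{3I} - β_{4I}` -/
def beta3KI : V → V → V → C := fun X Y Z => M.betaI X Y Z - M.betaE3I X Y Z - M.beta4I X Y Z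

def beta3KJ : V → V → V → C := fun X Y Z => M.betaJ X Y Z - M.betaE3J X Y Z - M.beta4J X Y Z

def beta3KK : V → V → V → C := fun X Y Z => M.betaK X Y Z - M.betaE3K X Y Z - M.beta4K X Y Z

/-- `β_I^{(3)} = (1/6) (2 - 𝓛_J - 𝓛_K) β_I^{(3+K)}` -/
def beta3I : V → V → V → C := fun X Y Z =>
  (1/6:ℝ) • ((2:ℝ) • M.beta3KI X Y Z - calL M.J M.beta3KI X Y Z - calL M.K M.beta3KI X Y Z)

def beta3J : V → V → V → C := fun X Y Z =>
  (1/6:ℝ) • ((2:ℝ) • M.beta3KJ X Y Z - calL M.K M.beta3KJ X Y Z - calL M.I M.beta3KJ X Y Z)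

def beta3K : V → V → V → C := fun X Y Z =>
  (1/6:ℝ) • ((2:ℝ) • M.beta3KK X Y Z - calL M.I M.beta3KK X Y Z - calL M.J M.beta3KK X Y Z)

/-- `β_I^{(K)} = (1/6) (4 + 𝓛_J + 𝓛_K) β_I^{(3+K)}` -/
def betaKI : V → V → V → C := fun X Y Z =>
  (1/6:ℝ) • ((4:ℝ) • M.beta3KI X Y Z + calL M.J M.beta3KI X Y Z + calL M.K M.beta3KI X Y Z)

def betaKJ : V → V → V → C := fun X Y Z =>
  (1/6:ℝ) • ((4:ℝ) • M.beta3KJ X Y Z + calL M.K M.beta3KJ X Y Z + calL M.I M.beta3KJ X Y Z)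

def betaKK : V → V → V → C := fun X Y Z =>
  (1/6:ℝ) • ((4:ℝ) • M.beta3KK X Y Z + calL M.I M.beta3KK X Y Z + calL M.J M.beta3KK X Y Z)

/-- the three-form `ψ^{(3)} = (1/12)(β_I^{(3)} + β_J^{(3)} + β_K^{(3)})` determining `ξ_{33}` -/
def psi3 : V → V → V → C := fun X Y Z =>
  (1/12:ℝ) • (M.beta3I X Y Z + M.beta3J X Y Z + M.beta3K X Y Z)

/-- the three-form `ψ^{(K)} = -(1/48)(β_I^{(K)} + β_J^{(K)} + β_K^{(K)})` determining `ξ_{KH}` -/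
def psiK : V → V → V → C := fun X Y Z =>
  (-(1/48:ℝ)) • (M.betaKI X Y Z + M.betaKJ X Y Z + M.betaKK X Y Z)

/-- the three-form `ψ^{(3)}_I` determining `ξ_{3H}` -/
def psi3I : V → V → V → C := fun X Y Z =>
  (-(1/8:ℝ)) • M.beta3I X Y Z
    + (1/48:ℝ) • ((3:ℝ) • (M.beta3I X Y Z + M.beta3J X Y Z + M.beta3K X Y Z)
        + calL M.I (fun a b c => M.beta3I a b c + M.beta3J a b c + M.beta3K a b c) X Y Z)

def psi3J : V → V → V → C := fun X Y Z =>
  (-(1/8:ℝ)) • M.beta3J X Y Z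
    + (1/48:ℝ) • ((3:ℝ) • (M.beta3I X Y Z + M.beta3J X Y Z + M.beta3K X Y Z)
        + calL M.J (fun a b c => M.beta3I a b c + M.beta3J a b c + M.beta3K a b c) X Y Z)

def psi3K : V → V → V → C := fun X Y Z =>
  (-(1/8:ℝ)) • M.beta3K X Y Z
    + (1/48:ℝ) • ((3:ℝ) • (M.beta3I X Y Z + M.beta3J X Y Z + M.beta3K X Y Z)
        + calL M.K (fun a b c => M.beta3I a b c + M.beta3J a b c + M.beta3K a b c) X Y Z)

/-- the three-form `ψ^{(K)}_I` determining `ξ_{K3}` -/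
def psiKI : V → V → V → C := fun X Y Z =>
  (-(1/2:ℝ)) • M.betaKI X Y Z
    + (1/6:ℝ) • (M.betaKI X Y Z + M.betaKJ X Y Z + M.betaKK X Y Z)

def psiKJ : V → V → V → C := fun X Y Z =>
  (-(1/2:ℝ)) • M.betaKJ X Y Z
    + (1/6:ℝ) • (M.betaKI X Y Z + M.betaKJ X Y Z + M.betaKK X Y Z)

def psiKK : V → V → V → C := fun X Y Z =>
  (-(1/2:ℝ)) • M.betaKK X Y Z
    + (1/6:ℝ) • (M.betaKI X Y Z + M.betaKJ X Y Z + M.betaKK X Y Z)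

/-- the one-form `θ^ξ` determining `ξ_{EH}`,
defined by `(6/n)(2n+1)(n-1) θ^ξ(X) = -⟨ξ_{e_i} e_i, X⟩` -/
def thetaXi : V → C := fun X =>
  (-((n:ℝ)/(6*(2*(n:ℝ)+1)*((n:ℝ)-1)))) • ∑ i, M.g (M.xi (M.frame i) (M.frame i)) X

/-- the local one-form `θ^ξ_I`, defined by `(2/n)(2n+1)(n-1) θ^ξ_I(X) = -⟨I ξ_{e_i} I e_i, X⟩` -/
def thetaXiI : V → C := fun X =>
  (-((n:ℝ)/(2*(2*(n:ℝ)+1)*((n:ℝ)-1)))) •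
    ∑ i, M.g (M.I (M.xi (M.frame i) (M.I (M.frame i)))) X

def thetaXiJ : V → C := fun X =>
  (-((n:ℝ)/(2*(2*(n:ℝ)+1)*((n:ℝ)-1)))) •
    ∑ i, M.g (M.J (M.xi (M.frame i) (M.J (M.frame i)))) X

def thetaXiK : V → C := fun X =>
  (-((n:ℝ)/(2*(2*(n:ℝ)+1)*((n:ℝ)-1)))) •
    ∑ i, M.g (M.K (M.xi (M.frame i) (M.K (M.frame i)))) X

/-- `α_I = -λ_I ⊗ g + (1/2)(J_(2) - J_(3)) ∇ω_K` -/
def alphaI : V → V → V → C := fun X Y Z =>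
  -(M.lambdaI X * M.g Y Z)
    + (1/2:ℝ) • (-(M.nab2 (M.omega M.K) X (M.J Y) Z) + M.nab2 (M.omega M.K) X Y (M.J Z))

def alphaJ : V → V → V → C := fun X Y Z =>
  -(M.lambdaJ X * M.g Y Z)
    + (1/2:ℝ) • (-(M.nab2 (M.omega M.I) X (M.K Y) Z) + M.nab2 (M.omega M.I) X Y (M.K Z))

def alphaK : V → V → V → C := fun X Y Z =>
  -(M.lambdaK X * M.g Y Z)
    + (1/2:ℝ) • (-(M.nab2 (M.omega M.J) X (M.I Y) Z) + M.nab2 (M.omega M.J) X Y (M.I Z))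

/-- the one-form `η_I(X) = α_I(e_i; e_i, X)` -/
def etaI : V → C := fun X => ∑ i, M.alphaI (M.frame i) (M.frame i) X

def etaJ : V → C := fun X => ∑ i, M.alphaJ (M.frame i) (M.frame i) X

def etaK : V → C := fun X => ∑ i, M.alphaK (M.frame i) (M.frame i) X

/-- the fundamental four-form `Ω = Σ_A ω_A ∧ ω_A` -/
def Omega4 : V → V → V → V → C := fun X Y Z W =>
  wedge22 (M.omega M.I) (M.omega M.I) X Y Z W
    + wedge22 (M.omega M.J) (M.omega M.J) X Y Z W
    + wedge22 (M.omega M.K) (M.omega M.K) X Y Z W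

/-- the one-form `θ^{d*Ω} = (1/3) Σ_A A Λ_A d*Ω` -/
def thetaDOmega : V → C := fun X =>
  (1/3:ℝ) • (act1 M.I (M.Lam M.I (M.codiff4 M.Omega4)) X
    + act1 M.J (M.Lam M.J (M.codiff4 M.Omega4)) X
    + act1 M.K (M.Lam M.K (M.codiff4 M.Omega4)) X)

/-- the vector-valued torsion: `g(W, T(X,Y)) = T(W,X,Y)` -/
def Tvec (T : V → V → V → C) : V → V → V := fun X Y => ∑ i, T (M.frame i) X Y • M.frame i

/-- the connection `∇ + (1/2) T` associated to a torsion (0,3)-tensor `T` -/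
def nabT (T : V → V → V → C) : V → V → V := fun X Y => M.nab X Y + (1/2:ℝ) • M.Tvec T X Y

/-- a connection is metric -/
def MetricConn (nab' : V → V → V) : Prop :=
  ∀ X Y Z, M.D X (M.g Y Z) = M.g (nab' X Y) Z + M.g Y (nab' X Z)

/-- a connection is quaternionic, with associated local one-forms `γ_I, γ_J, γ_K`:
`∇'_X I = γ_K(X) J - γ_J(X) K`, and cyclically -/
def QuatConn (nab' : V → V → V) (γI γJ γK : V → C) : Prop :=
  (∀ X Y, nab' X (M.I Y) - M.I (nab' X Y) = γK X • M.J Y - γJ X • M.K Y) ∧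
  (∀ X Y, nab' X (M.J Y) - M.J (nab' X Y) = γI X • M.K Y - γK X • M.I Y) ∧
  (∀ X Y, nab' X (M.K Y) - M.K (nab' X Y) = γJ X • M.I Y - γI X • M.J Y)

/-- the HKT condition: `I, J, K` integrable and there is a metric connection
`∇ + (1/2)T` with totally skew torsion making `I, J, K` parallel -/
def IsHKT : Prop :=
  (∀ X Y, M.nijV M.I X Y = 0) ∧ (∀ X Y, M.nijV M.J X Y = 0) ∧
  (∀ X Y, M.nijV M.K X Y = 0) ∧
  ∃ T : V → V → V → C, IsAlt3 T ∧ Lin3 T ∧ M.MetricConn (M.nabT T) ∧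
    (∀ X Y, M.nabT T X (M.I Y) = M.I (M.nabT T X Y)) ∧
    (∀ X Y, M.nabT T X (M.J Y) = M.J (M.nabT T X Y)) ∧
    (∀ X Y, M.nabT T X (M.K Y) = M.K (M.nabT T X Y))

/-- membership of a three-form in `KH`: type `{2,1}` for each `A` and `Λ_A ψ = 0` -/
def InKH3 (ψ : V → V → V → C) : Prop :=
  IsAlt3 ψ ∧ Lin3 ψ ∧
  calL M.I ψ = ψ ∧ calL M.J ψ = ψ ∧ calL M.K ψ = ψ ∧
  M.Lam M.I ψ = 0 ∧ M.Lam M.J ψ = 0 ∧ M.Lam M.K ψ = 0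

/-- the `(0,3)`-tensor of the `KH`-component of the torsion determined by `ψ^{(K)}`:
`3ψ - Σ_A A_(23) ψ` -/
def xiKH3 (ψ : V → V → V → C) : V → V → V → C := fun X Y Z =>
  (3:ℝ) • ψ X Y Z - (op23 M.I ψ X Y Z + op23 M.J ψ X Y Z + op23 M.K ψ X Y Z)

/-- the `(0,3)`-tensor of the `EH`-component of the torsion determined by the
one-form `θ`: `3 e_i ⊗ e_i ∧ θ - Σ_A (e_i ⊗ A e_i ∧ A θ + (2/n) A θ ⊗ ω_A)` -/
def xiEH3 (θ : V → C) : V → V → V → C := fun X Y Z =>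
  (3:ℝ) • ∑ i, M.g (M.frame i) X *
      (M.g (M.frame i) Y * θ Z - M.g (M.frame i) Z * θ Y)
  - ((∑ i, M.g (M.frame i) X *
        (M.g (M.I (M.frame i)) Y * act1 M.I θ Z - M.g (M.I (M.frame i)) Z * act1 M.I θ Y))
    + (∑ i, M.g (M.frame i) X *
        (M.g (M.J (M.frame i)) Y * act1 M.J θ Z - M.g (M.J (M.frame i)) Z * act1 M.J θ Y))
    + (∑ i, M.g (M.frame i) X *
        (M.g (M.K (M.frame i)) Y * act1 M.K θ Z - M.g (M.K (M.frame i)) Z * act1 M.K θ Y)))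
  - (2/(n:ℝ)) • (act1 M.I θ X * M.omega M.I Y Z + act1 M.J θ X * M.omega M.J Y Z
      + act1 M.K θ X * M.omega M.K Y Z)

/-- the intrinsic torsion lies in `(K+E)H`: it is the sum of a `KH`-tensor and an
`EH`-tensor as described in §3 of the paper -/
def inKEH : Prop :=
  ∃ (ψ : V → V → V → C) (θ : V → C), M.InKH3 ψ ∧ Lin1 θ ∧
    ∀ X Y Z, M.g Y (M.xi X Z) = M.xiKH3 ψ X Y Z + M.xiEH3 θ X Y Z

end derived

end AQH

namespace AQH

section helpers

variable {n : ℕ} {C V : Type*} [CommRing C] [Algebra ℝ C] [AddCommGroup V] [Module C V]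

variable (M : AQH n C V)

/-- a metric-compatible almost complex structure -/
structure Good (A : V → V) : Prop where
  add : ∀ X Y, A (X + Y) = A X + A Y
  smul : ∀ (f : C) X, A (f • X) = f • A X
  sq : ∀ X, A (A X) = -X
  skew : ∀ X Y, M.g (A X) Y = -M.g X (A Y)

theorem Good.neg {M : AQH n C V} {A : V → V} (h : M.Good A) (X : V) : A (-X) = -A X := by
  have := h.smul (-1) X
  simpa using this

theorem Good.sub {M : AQH n C V} {A : V → V} (h : M.Good A) (X Y : V) :
    A (X - Y) = A X - A Y := by
  rw [sub_eq_add_neg, h.add, h.neg, sub_eq_add_neg]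

theorem g_neg (X Y : V) : M.g (-X) Y = -M.g X Y := by
  have := M.g_smul (-1) X Y
  simpa using this

theorem g_add' (X Y Z : V) : M.g X (Y + Z) = M.g X Y + M.g X Z := by
  rw [M.g_symm, M.g_add, M.g_symm Y, M.g_symm Z]

theorem g_smul' (f : C) (X Y : V) : M.g X (f • Y) = f * M.g X Y := by
  rw [M.g_symm, M.g_smul, M.g_symm Y]

theorem g_neg' (X Y : V) : M.g X (-Y) = -M.g X Y := by
  rw [M.g_symm, g_neg, M.g_symm Y]

theorem g_sub (X Y Z : V) : M.g (X - Y) Z = M.g X Z - M.g Y Z := by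
  rw [sub_eq_add_neg, M.g_add, g_neg, sub_eq_add_neg]

theorem g_sub' (X Y Z : V) : M.g X (Y - Z) = M.g X Y - M.g X Z := by
  rw [sub_eq_add_neg, g_add', g_neg', sub_eq_add_neg]

theorem nab_neg (X Y : V) : M.nab X (-Y) = -M.nab X Y := by
  have h0 : M.nab X 0 = 0 := by
    have := M.nab_add X 0 0
    simpa using this
  have := M.nab_add X Y (-Y)
  rw [add_neg_cancel, h0] at this
  exact (neg_eq_of_add_eq_zero_right this.symm).symm

theorem D_neg (X : V) (f : C) : M.D X (-f) = -M.D X f := by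
  have h0 : M.D X 0 = 0 := by
    have := M.D_add X 0 0
    simpa using this
  have := M.D_add X f (-f)
  rw [add_neg_cancel, h0] at this
  exact (neg_eq_of_add_eq_zero_right this.symm).symm

theorem good_I : M.Good M.I where
  add X Y := by simpa using M.I_lin 1 X Y
  smul f X := by
    have h0 : M.I 0 = 0 := by simpa using M.I_lin 1 0 0
    simpa [h0] using M.I_lin f X 0
  sq := M.I_sq
  skew X Y := by
    have := M.I_metric X (M.I Y)
    rw [M.I_sq, g_neg'] at this
    rw [← this, neg_neg]

theorem good_J : M.Good M.J where
  add X Y := by simpa using M.J_lin 1 X Y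
  smul f X := by
    have h0 : M.J 0 = 0 := by simpa using M.J_lin 1 0 0
    simpa [h0] using M.J_lin f X 0
  sq := M.J_sq
  skew X Y := by
    have := M.J_metric X (M.J Y)
    rw [M.J_sq, g_neg'] at this
    rw [← this, neg_neg]

theorem good_K : M.Good M.K where
  add X Y := by simpa using M.K_lin 1 X Y
  smul f X := by
    have h0 : M.K 0 = 0 := by simpa using M.K_lin 1 0 0
    simpa [h0] using M.K_lin f X 0
  sq X := by
    rw [M.K_def, M.K_def, M.anticomm (M.I (M.J X)), M.I_sq, M.good_J.neg, neg_neg, M.J_sq]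
  skew X Y := by
    rw [M.K_def, M.K_def, M.good_I.skew, M.good_J.skew, M.anticomm, g_neg', neg_neg]

/-- sums against the frame -/
theorem sum_apply (L : V → C) (hL : ∀ X Y, L (X + Y) = L X + L Y)
    (hs : ∀ (f : C) X, L (f • X) = f * L X) (X : V) :
    L X = ∑ i, M.g X (M.frame i) * L (M.frame i) := by
  let L' : V →ₗ[C] C := { toFun := L, map_add' := hL, map_smul' := fun f X => by simp [hs] }
  have : L' X = ∑ i, M.g X (M.frame i) * L' (M.frame i) := by
    conv_lhs => rw [M.frame_span X]
    rw [map_sum]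
    simp
  exact this

theorem trace_skew {B : V → V} (hB : M.Good B) (T : V → V → C)
    (h1 : ∀ X Y Z, T (X + Y) Z = T X Z + T Y Z) (h2 : ∀ (f : C) X Z, T (f • X) Z = f * T X Z)
    (h3 : ∀ X Y Z, T Z (X + Y) = T Z X + T Z Y) (h4 : ∀ (f : C) X Z, T Z (f • X) = f * T Z X) :
    ∑ j, T (B (M.frame j)) (M.frame j) = -∑ j, T (M.frame j) (B (M.frame j)) := by
  have e1 : ∀ j, T (B (M.frame j)) (M.frame j)
      = ∑ i, M.g (B (M.frame j)) (M.frame i) * T (M.frame i) (M.frame j) := fun j =>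
    M.sum_apply (fun X => T X (M.frame j)) (fun X Y => h1 X Y _) (fun f X => h2 f X _) _
  have e2 : ∀ j, T (M.frame j) (B (M.frame j))
      = ∑ i, M.g (B (M.frame j)) (M.frame i) * T (M.frame j) (M.frame i) := fun j =>
    M.sum_apply (fun X => T (M.frame j) X) (fun X Y => h3 X Y _) (fun f X => h4 f X _) _
  simp_rw [e1, e2]
  rw [Finset.sum_comm, ← Finset.sum_neg_distrib]
  refine Finset.sum_congr rfl fun i _ => ?_
  rw [← Finset.sum_neg_distrib]
  refine Finset.sum_congr rfl fun j _ => ?_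
  rw [hB.skew, M.g_symm]
  ring

theorem nabA_addX {A : V → V} (hA : M.Good A) (X Y Z : V) :
    M.nabA A (X + Y) Z = M.nabA A X Z + M.nabA A Y Z := by
  simp only [nabA, M.nab_addX, hA.add]; abel

theorem nabA_smulX {A : V → V} (hA : M.Good A) (f : C) (X Z : V) :
    M.nabA A (f • X) Z = f • M.nabA A X Z := by
  simp only [nabA, M.nab_smulX, hA.smul, smul_sub]

theorem nabA_add {A : V → V} (hA : M.Good A) (X Y Z : V) :
    M.nabA A X (Y + Z) = M.nabA A X Y + M.nabA A X Z := by
  simp only [nabA, M.nab_add, hA.add]; abel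

theorem nabA_smul {A : V → V} (hA : M.Good A) (f : C) (X Z : V) :
    M.nabA A X (f • Z) = f • M.nabA A X Z := by
  simp only [nabA, M.nab_leibniz, hA.smul, hA.add, smul_sub]; abel

theorem nabA_skew {A : V → V} (hA : M.Good A) (X Y Z : V) :
    M.g Y (M.nabA A X Z) = -M.g Z (M.nabA A X Y) := by
  simp only [nabA, g_sub']
  have h1 := M.nab_metric X Y (A Z)
  have h2 := M.nab_metric X Z (A Y)
  have h3 : M.g Y (A Z) = -M.g Z (A Y) := by rw [M.g_symm, hA.skew]
  have h4 : M.g (M.nab X Y) (A Z) = -M.g Z (A (M.nab X Y)) := by rw [M.g_symm, hA.skew]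
  have h5 : M.g (M.nab X Z) (A Y) = -M.g Y (A (M.nab X Z)) := by rw [M.g_symm, hA.skew]
  rw [h3, D_neg, h2, h4, h5] at h1
  linear_combination -h1

theorem d2_eq {A : V → V} (hA : M.Good A) (X Y Z : V) :
    M.d2 (M.omega A) X Y Z
      = M.g Y (M.nabA A X Z) + M.g Z (M.nabA A Y X) + M.g X (M.nabA A Z Y) := by
  have sk : ∀ U W, M.g U (A W) = -M.g W (A U) := fun U W => by rw [M.g_symm, hA.skew]
  simp only [d2, omega, nabA, g_sub', ← M.torsion_free, g_sub]
  rw [sk X Z, D_neg, M.nab_metric, M.nab_metric, M.nab_metric,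
    sk (M.nab X Y) Z, sk (M.nab Y X) Z, sk (M.nab X Z) Y, sk (M.nab Z X) Y,
    sk (M.nab Y Z) X, sk (M.nab Z Y) X]
  ring

/-- anticommuting structures: derivative of the relation `AB + BA = 0` -/
theorem nabA_anti {A B : V → V} (hA : M.Good A) (hB : M.Good B) (h : ∀ X, A (B X) = -B (A X))
    (X Y : V) : M.nabA A X (B Y) + M.nabA B X (A Y)
      = -(A (M.nabA B X Y) + B (M.nabA A X Y)) := by
  simp only [nabA, hA.sub, hB.sub, h, nab_neg]; abel

theorem nabA_self {A : V → V} (hA : M.Good A) (X Y : V) :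
    M.nabA A X (A Y) = -A (M.nabA A X Y) := by
  simp only [nabA, hA.sub, hA.sq, nab_neg]; abel

theorem half_cancel {x : C} (h : x = -x) : x = 0 := by
  have h2 : (2 : ℝ) • x = 0 := by rw [two_smul]; nth_rewrite 2 [h]; simp
  have : (1/2 : ℝ) • ((2 : ℝ) • x) = 0 := by rw [h2, smul_zero]
  simpa [smul_smul] using this

/-- the first trace `Σ (∇_X ω_A)(B e, e)` -/
def tr1 (A B : V → V) (X : V) : C := ∑ j, M.g (B (M.frame j)) (M.nabA A X (M.frame j))

/-- the second trace -/
def tr2 (A B : V → V) (X : V) : C := ∑ j, M.g X (M.nabA A (M.frame j) (B (M.frame j)))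

theorem tr1_eq {A B : V → V} (hA : M.Good A) (hB : M.Good B) (X : V) :
    M.tr1 A B X = -∑ j, M.g (M.frame j) (M.nabA A X (B (M.frame j))) := by
  apply M.trace_skew hB (fun U W => M.g U (M.nabA A X W))
  · intro U W Z; exact M.g_add _ _ _
  · intro f U Z; exact M.g_smul _ _ _
  · intro U W Z; simp only [M.nabA_add hA, g_add']
  · intro f U Z; simp only [M.nabA_smul hA, g_smul']

theorem tr1_self {A : V → V} (hA : M.Good A) (X : V) : M.tr1 A A X = 0 := by
  apply half_cancel
  conv_lhs => rw [M.tr1_eq hA hA]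
  congr 1
  refine Finset.sum_congr rfl fun j _ => ?_
  rw [M.nabA_self hA, g_neg', hA.skew]

theorem tr1_anti {A B : V → V} (hA : M.Good A) (hB : M.Good B) (h : ∀ X, A (B X) = -B (A X))
    (X : V) : M.tr1 A B X + M.tr1 B A X = 0 := by
  apply half_cancel
  conv_lhs => rw [M.tr1_eq hA hB, M.tr1_eq hB hA]
  rw [← neg_add, tr1, tr1, ← Finset.sum_add_distrib, ← Finset.sum_add_distrib]
  congr 1
  refine Finset.sum_congr rfl fun j _ => ?_
  rw [← g_add', M.nabA_anti hA hB h, g_neg', g_add', hA.skew, hB.skew]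
  ring

theorem Lam_eq {A B : V → V} (hA : M.Good A) (hB : M.Good B) (X : V) :
    M.Lam B (M.d2 (M.omega A)) X = (1/2 : ℝ) • M.tr1 A B X + M.tr2 A B X := by
  have key : ∑ i, ∑ j, M.d2 (M.omega A) X (M.frame i) (M.frame j)
        * M.omega B (M.frame i) (M.frame j)
      = M.tr1 A B X + (M.tr2 A B X + M.tr2 A B X) := by
    have e : ∀ j, ∑ i, M.d2 (M.omega A) X (M.frame i) (M.frame j)
        * M.omega B (M.frame i) (M.frame j)
        = M.d2 (M.omega A) X (B (M.frame j)) (M.frame j) := by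
      intro j
      rw [M.sum_apply (fun U => M.d2 (M.omega A) X U (M.frame j)) _ _ (B (M.frame j))]
      · refine Finset.sum_congr rfl fun i _ => ?_
        rw [omega, M.g_symm, mul_comm]
      · intro U W
        simp only [M.d2_eq hA, M.g_add, g_add', M.nabA_add hA, M.nabA_addX hA]; ring
      · intro f U
        simp only [M.d2_eq hA, M.g_smul, g_smul', M.nabA_smul hA, M.nabA_smulX hA]; ring
    have t := M.trace_skew hB (fun U W => M.g W (M.nabA A U X))
      (fun U W Z => by simp only [M.nabA_addX hA, g_add'])
      (fun f U Z => by simp only [M.nabA_smulX hA, g_smul'])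
      (fun U W Z => by simp only [M.g_add])
      (fun f U Z => by simp only [M.g_smul])
    rw [Finset.sum_comm]
    rw [Finset.sum_congr rfl fun j _ => e j]
    simp only [M.d2_eq hA, Finset.sum_add_distrib]
    rw [t, tr1, tr2, ← Finset.sum_neg_distrib, add_assoc]
    congr 2
    refine Finset.sum_congr rfl fun j _ => ?_
    rw [M.nabA_skew hA _ (B _) X, neg_neg]
  rw [Lam, key, smul_add, ← two_smul ℝ (M.tr2 A B X), smul_smul]
  norm_num

theorem main_aux {P Q R : V → V} (hP : M.Good P) (hQ : M.Good Q) (hR : M.Good R)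
    (h1 : ∀ X, Q (R X) = -R (Q X)) (h2 : ∀ X, P (Q X) = R X) (h3 : ∀ X, P (R X) = -Q X) :
    act1 P (M.Lam R (M.d2 (M.omega Q))) + act1 P (M.Lam Q (M.d2 (M.omega R)))
      = -M.Lam Q (M.d2 (M.omega Q)) + M.Lam R (M.d2 (M.omega R)) := by
  funext X
  simp only [Pi.add_apply, Pi.neg_apply, act1, M.Lam_eq hQ hR, M.Lam_eq hR hQ, M.Lam_eq hQ hQ,
    M.Lam_eq hR hR, M.tr1_self hQ, M.tr1_self hR, smul_zero, zero_add]
  have a := M.tr1_anti hQ hR h1 (P X)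
  have b : (1/2 : ℝ) • M.tr1 Q R (P X) + (1/2 : ℝ) • M.tr1 R Q (P X) = 0 := by
    rw [← smul_add, a, smul_zero]
  have c : -(M.tr2 Q R (P X) + M.tr2 R Q (P X)) = -M.tr2 Q Q X + M.tr2 R R X := by
    simp only [tr2, ← Finset.sum_add_distrib, ← Finset.sum_neg_distrib]
    refine Finset.sum_congr rfl fun j _ => ?_
    rw [← g_add', M.nabA_anti hQ hR h1, M.nabA_self hQ, M.nabA_self hR, hP.skew, hP.neg, hP.add,
      h2, h3]
    simp only [g_neg', g_add']
    ring
  linear_combination c - b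

end helpers

end AQH

open AQH in
/-- On any almost quaternion-Hermitian manifold, for any local
adapted basis `I, J, K`: `IΛ_K dω_J + IΛ_J dω_K = -Λ_J dω_J + Λ_K dω_K`,
together with the identities obtained by cyclic permutation of `(I, J, K)`. -/
theorem statement6 {n : ℕ} {C V : Type*} [CommRing C] [Algebra ℝ C] [AddCommGroup V]
    [Module C V] [Module ℝ V] [IsScalarTower ℝ C V] (M : AQH n C V) :
    (act1 M.I (M.Lam M.K (M.d2 (M.omega M.J))) + act1 M.I (M.Lam M.J (M.d2 (M.omega M.K)))
      = -M.Lam M.J (M.d2 (M.omega M.J)) + M.Lam M.K (M.d2 (M.omega M.K))) ∧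
    (act1 M.J (M.Lam M.I (M.d2 (M.omega M.K))) + act1 M.J (M.Lam M.K (M.d2 (M.omega M.I)))
      = -M.Lam M.K (M.d2 (M.omega M.K)) + M.Lam M.I (M.d2 (M.omega M.I))) ∧
    (act1 M.K (M.Lam M.J (M.d2 (M.omega M.I))) + act1 M.K (M.Lam M.I (M.d2 (M.omega M.J)))
      = -M.Lam M.I (M.d2 (M.omega M.I)) + M.Lam M.J (M.d2 (M.omega M.J))) := by
  have KI : ∀ X, M.K (M.I X) = M.J X := fun X => by
    rw [M.K_def, M.anticomm, M.I_sq, M.good_J.neg, neg_neg]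
  have IK : ∀ X, M.I (M.K X) = -M.J X := fun X => by rw [M.K_def, M.I_sq]
  have KJ : ∀ X, M.K (M.J X) = -M.I X := fun X => by rw [M.K_def, M.J_sq, M.good_I.neg]
  have JK : ∀ X, M.J (M.K X) = M.I X := fun X => by
    rw [M.K_def, M.anticomm, M.good_J.neg, M.J_sq, neg_neg]
  have IJ : ∀ X, M.I (M.J X) = M.K X := fun X => (M.K_def X).symm
  have JI : ∀ X, M.J (M.I X) = -M.K X := fun X => by rw [M.K_def, M.anticomm, neg_neg]
  refine ⟨M.main_aux M.good_I M.good_J M.good_K (fun X => ?_) IJ IK,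
    M.main_aux M.good_J M.good_K M.good_I (fun X => ?_) JK JI,
    M.main_aux M.good_K M.good_I M.good_J (fun X => ?_) KI KJ⟩
  · rw [JK, KJ, neg_neg]
  · rw [KI, IK, neg_neg]
  · rw [IJ, JI, neg_neg]
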